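/- arXiv:2402.03990 — 2 statements merged into one kernel-verified Lean document; each statement's English description precedes it below -/
import Mathlib

section
/- Fix q ∈ (0,1]. For every integer k ≥ 1 there exists a measurable function g_k: ℝ → [0,∞) such that |∂_u^k f_x(u)| ≤ g_k(x) for all u ∈ [−1,1] and all x ∈ ℝ, and E_{x∼N(0,1)}[g_k(x)] < ∞. (Here ∂_u^k f_x denotes the k-th derivative of the smooth map u ↦ f_x(u).) -/
/-!
Write `p(u) = -x u - (q - 1/2) u²`. Factoring `φ(x - (1-q)u)` out of the mixture gives
`f_x(u) = ((x - (1-q)u)² - x²)/2 - log (q + (1-q) e^{p(u)})`. With the logistic weight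
`s = (1-q) e^p / (q + (1-q) e^p) ∈ [0,1]` one has `∂_u f = -(1-q)(x - (1-q)u) - (∂_u p) s` and
`∂_u s = (∂_u p) s (1 - s)`. Hence the algebra of polynomials in `x, u, s` contains `∂_u f` and is stable
under `∂_u` (`diffAlg_hasDerivAt`), so it contains every `∂_u^k f`, `k ≥ 1`. Since `|u| ≤ 1` and
`|s| ≤ 1`, each of its members is bounded by some `C (1 + |x|)^n` (`diffAlg_bound`), which is
Gaussian-integrable.
-/

open MeasureTheory ProbabilityTheory Real

/-- The standard normal density `φ(t) = (2π)^{−1/2}·e^{−t²/2}`. -/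
noncomputable def stdphi (t : ℝ) : ℝ := (Real.sqrt (2 * π))⁻¹ * Real.exp (-t ^ 2 / 2)

/-- `f_x(u) = ln( φ(x) / ( q·φ(x − (1−q)u) + (1−q)·φ(x + qu) ) )`. -/
noncomputable def fX (q x u : ℝ) : ℝ :=
  Real.log (stdphi x / (q * stdphi (x - (1 - q) * u) + (1 - q) * stdphi (x + q * u)))

/-- The exponent `p(u)`, the log-ratio of the two Gaussian densities in the mixture. -/
noncomputable def expo (q x u : ℝ) : ℝ := -x * u - (q - 1 / 2) * u ^ 2

/-- The posterior weight `s` of the second mixture component. -/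
noncomputable def wt (q x u : ℝ) : ℝ :=
  (1 - q) * Real.exp (expo q x u) / (q + (1 - q) * Real.exp (expo q x u))

/-- Functions of `(x, u)` that are polynomials in `x`, `u` and `wt q x u`. -/
noncomputable def diffAlg (q : ℝ) : Subalgebra ℝ (ℝ → ℝ → ℝ) :=
  Algebra.adjoin ℝ {fun x _ => x, fun _ u => u, wt q}

lemma x_mem_diffAlg (q : ℝ) : (fun x _ => x : ℝ → ℝ → ℝ) ∈ diffAlg q :=
  Algebra.subset_adjoin (by simp)

lemma u_mem_diffAlg (q : ℝ) : (fun _ u => u : ℝ → ℝ → ℝ) ∈ diffAlg q :=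
  Algebra.subset_adjoin (by simp)

lemma wt_mem_diffAlg (q : ℝ) : wt q ∈ diffAlg q :=
  Algebra.subset_adjoin (by simp)

lemma const_mem_diffAlg (q c : ℝ) : (fun _ _ => c : ℝ → ℝ → ℝ) ∈ diffAlg q :=
  (diffAlg q).algebraMap_mem c

/-- The `u`-derivative of `expo`. -/
noncomputable def dexpo (q x u : ℝ) : ℝ := -x + (-(2 * q - 1)) * u

lemma dexpo_mem_diffAlg (q : ℝ) : dexpo q ∈ diffAlg q :=
  (diffAlg q).add_mem ((diffAlg q).neg_mem (x_mem_diffAlg q))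
    ((diffAlg q).mul_mem (const_mem_diffAlg q _) (u_mem_diffAlg q))

lemma hasDerivAt_expo (q x u : ℝ) : HasDerivAt (expo q x) (dexpo q x u) u := by
  have h := ((hasDerivAt_id u).const_mul (-x)).sub
    (((hasDerivAt_id u).pow 2).const_mul (q - 1 / 2))
  refine h.congr_deriv ?_
  simp [dexpo]
  ring

lemma hasDerivAt_den (q x u : ℝ) :
    HasDerivAt (fun v => q + (1 - q) * Real.exp (expo q x v))
      ((1 - q) * (Real.exp (expo q x u) * dexpo q x u)) u :=
  ((hasDerivAt_expo q x u).exp.const_mul (1 - q)).const_add q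

lemma den_pos {q : ℝ} (hq : q ∈ Set.Ioc (0 : ℝ) 1) (x u : ℝ) : 0 < q + (1 - q) * Real.exp (expo q x u) := by
  have h1 : 0 ≤ 1 - q := by linarith [hq.2]
  have := mul_nonneg h1 (Real.exp_pos (expo q x u)).le
  linarith [hq.1]

lemma abs_wt_le_one {q : ℝ} (hq : q ∈ Set.Ioc (0 : ℝ) 1) (x u : ℝ) : |wt q x u| ≤ 1 := by
  have h1 : 0 ≤ 1 - q := by linarith [hq.2]
  have h2 := mul_nonneg h1 (Real.exp_pos (expo q x u)).le
  have h3 := den_pos hq x u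
  rw [wt, abs_of_nonneg (div_nonneg h2 h3.le), div_le_one h3]
  linarith [hq.1]

lemma hasDerivAt_wt {q : ℝ} (hq : q ∈ Set.Ioc (0 : ℝ) 1) (x u : ℝ) :
    HasDerivAt (wt q x) (dexpo q x u * (wt q x u * (1 - wt q x u))) u := by
  have h3 := (den_pos hq x u).ne'
  have h := ((hasDerivAt_expo q x u).exp.const_mul (1 - q)).div (hasDerivAt_den q x u) h3
  refine h.congr_deriv ?_
  simp only [wt]
  field_simp

lemma diffAlg_hasDerivAt {q : ℝ} (hq : q ∈ Set.Ioc (0 : ℝ) 1) {F : ℝ → ℝ → ℝ} (hF : F ∈ diffAlg q) :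
    ∃ G ∈ diffAlg q, ∀ x u, HasDerivAt (F x) (G x u) u := by
  induction hF using Algebra.adjoin_induction with
  | mem F hF =>
    rcases hF with rfl | rfl | rfl
    · exact ⟨_, const_mem_diffAlg q 0, fun x u => hasDerivAt_const u x⟩
    · exact ⟨_, const_mem_diffAlg q 1, fun x u => hasDerivAt_id u⟩
    · exact ⟨_, (diffAlg q).mul_mem (dexpo_mem_diffAlg q) ((diffAlg q).mul_mem (wt_mem_diffAlg q)
        ((diffAlg q).sub_mem (const_mem_diffAlg q 1) (wt_mem_diffAlg q))),
        fun x u => hasDerivAt_wt hq x u⟩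
  | algebraMap c => exact ⟨_, const_mem_diffAlg q 0, fun x u => hasDerivAt_const u c⟩
  | add F₁ F₂ _ _ h₁ h₂ =>
    obtain ⟨G₁, m₁, d₁⟩ := h₁
    obtain ⟨G₂, m₂, d₂⟩ := h₂
    exact ⟨_, (diffAlg q).add_mem m₁ m₂, fun x u => (d₁ x u).add (d₂ x u)⟩
  | mul F₁ F₂ k₁ k₂ h₁ h₂ =>
    obtain ⟨G₁, m₁, d₁⟩ := h₁
    obtain ⟨G₂, m₂, d₂⟩ := h₂
    exact ⟨_, (diffAlg q).add_mem ((diffAlg q).mul_mem m₁ k₂) ((diffAlg q).mul_mem k₁ m₂),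
      fun x u => (d₁ x u).mul (d₂ x u)⟩

lemma diffAlg_iteratedDeriv {q : ℝ} (hq : q ∈ Set.Ioc (0 : ℝ) 1) (k : ℕ) {F : ℝ → ℝ → ℝ}
    (hF : F ∈ diffAlg q) :
    ∃ G ∈ diffAlg q, ∀ x, iteratedDeriv k (F x) = G x := by
  induction k generalizing F with
  | zero => exact ⟨F, hF, fun x => iteratedDeriv_zero⟩
  | succ k ih =>
    obtain ⟨G, hG, hd⟩ := diffAlg_hasDerivAt hq hF
    obtain ⟨H, hH, hi⟩ := ih hG
    refine ⟨H, hH, fun x => ?_⟩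
    rw [iteratedDeriv_succ', ← hi x]
    congr 1
    exact funext fun u => (hd x u).deriv

lemma diffAlg_bound {q : ℝ} (hq : q ∈ Set.Ioc (0 : ℝ) 1) {F : ℝ → ℝ → ℝ} (hF : F ∈ diffAlg q) :
    ∃ C : ℝ, ∃ n : ℕ, 0 ≤ C ∧
      ∀ x, ∀ u ∈ Set.Icc (-1 : ℝ) 1, |F x u| ≤ C * (1 + |x|) ^ n := by
  induction hF using Algebra.adjoin_induction with
  | mem F hF =>
    rcases hF with rfl | rfl | rfl
    · exact ⟨1, 1, zero_le_one, fun x u _ => by simp⟩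
    · exact ⟨1, 0, zero_le_one, fun x u hu => by simpa using abs_le.2 hu⟩
    · exact ⟨1, 0, zero_le_one, fun x u _ => by simpa using abs_wt_le_one hq x u⟩
  | algebraMap c => exact ⟨|c|, 0, abs_nonneg c, fun x u _ => by simp [Pi.algebraMap_apply]⟩
  | add F₁ F₂ _ _ h₁ h₂ =>
    obtain ⟨C₁, n₁, p₁, b₁⟩ := h₁
    obtain ⟨C₂, n₂, p₂, b₂⟩ := h₂
    refine ⟨C₁ + C₂, n₁ + n₂, add_nonneg p₁ p₂, fun x u hu => ?_⟩
    have hx : 1 ≤ 1 + |x| := by linarith [abs_nonneg x]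
    calc |F₁ x u + F₂ x u| ≤ |F₁ x u| + |F₂ x u| := abs_add_le _ _
      _ ≤ C₁ * (1 + |x|) ^ n₁ + C₂ * (1 + |x|) ^ n₂ := add_le_add (b₁ x u hu) (b₂ x u hu)
      _ ≤ C₁ * (1 + |x|) ^ (n₁ + n₂) + C₂ * (1 + |x|) ^ (n₁ + n₂) := by
        gcongr <;> first | exact hx | omega
      _ = _ := by ring
  | mul F₁ F₂ _ _ h₁ h₂ =>
    obtain ⟨C₁, n₁, p₁, b₁⟩ := h₁
    obtain ⟨C₂, n₂, p₂, b₂⟩ := h₂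
    refine ⟨C₁ * C₂, n₁ + n₂, mul_nonneg p₁ p₂, fun x u hu => ?_⟩
    calc |F₁ x u * F₂ x u| = |F₁ x u| * |F₂ x u| := abs_mul _ _
      _ ≤ (C₁ * (1 + |x|) ^ n₁) * (C₂ * (1 + |x|) ^ n₂) :=
        mul_le_mul (b₁ x u hu) (b₂ x u hu) (abs_nonneg _) (by positivity)
      _ = _ := by ring

lemma fX_eq {q : ℝ} (hq : q ∈ Set.Ioc (0 : ℝ) 1) (x u : ℝ) :
    fX q x u = ((x - (1 - q) * u) ^ 2 - x ^ 2) / 2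
      - Real.log (q + (1 - q) * Real.exp (expo q x u)) := by
  have hc : (Real.sqrt (2 * π))⁻¹ ≠ 0 := by positivity
  have hD := den_pos hq x u
  have e1 : Real.exp (-(x + q * u) ^ 2 / 2)
      = Real.exp (-(x - (1 - q) * u) ^ 2 / 2) * Real.exp (expo q x u) := by
    rw [← Real.exp_add, expo]
    congr 1
    ring
  have e2 : Real.exp (-x ^ 2 / 2) = Real.exp (-(x - (1 - q) * u) ^ 2 / 2)
      * Real.exp (((x - (1 - q) * u) ^ 2 - x ^ 2) / 2) := by
    rw [← Real.exp_add]
    congr 1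
    ring
  have e3 : stdphi x / (q * stdphi (x - (1 - q) * u) + (1 - q) * stdphi (x + q * u))
      = Real.exp (((x - (1 - q) * u) ^ 2 - x ^ 2) / 2)
        / (q + (1 - q) * Real.exp (expo q x u)) := by
    have hE := (Real.exp_pos (-(x - (1 - q) * u) ^ 2 / 2)).ne'
    simp only [stdphi]
    rw [e1, e2, ← mul_div_mul_left _ (q + (1 - q) * Real.exp (expo q x u))
      (mul_ne_zero hc hE)]
    congr 1 <;> ring
  rw [fX, e3, Real.log_div (Real.exp_pos _).ne' hD.ne', Real.log_exp]

lemma hasDerivAt_fX {q : ℝ} (hq : q ∈ Set.Ioc (0 : ℝ) 1) (x u : ℝ) :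
    HasDerivAt (fX q x) ((-(1 - q)) * (x - (1 - q) * u) - dexpo q x u * wt q x u) u := by
  rw [show fX q x = _ from funext (fX_eq hq x)]
  have hD := (den_pos hq x u).ne'
  have h := ((((((hasDerivAt_id u).const_mul (1 - q)).const_sub x).pow 2).sub_const
    (x ^ 2)).div_const 2).sub ((hasDerivAt_den q x u).log hD)
  refine h.congr_deriv ?_
  simp only [wt, id]
  field_simp
  ring

lemma integrable_one_add_abs_pow (n : ℕ) :
    Integrable (fun x : ℝ => (1 + |x|) ^ n) (gaussianReal 0 1) := by
  have h : MemLp (fun x : ℝ => 1 + |x|) n (gaussianReal 0 1) := by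
    have h₁ : MemLp (id : ℝ → ℝ) n (gaussianReal 0 1) := by
      simpa using memLp_id_gaussianReal (μ := 0) (v := 1) (n : NNReal)
    have h₂ : MemLp (fun _ : ℝ => (1 : ℝ)) n (gaussianReal 0 1) := memLp_const 1
    exact h₂.add h₁.norm
  refine h.integrable_norm_pow'.congr (Filter.Eventually.of_forall fun x => ?_)
  have : 0 ≤ 1 + |x| := by positivity
  simp only [Real.norm_eq_abs, abs_of_nonneg this]

/-- For every `k ≥ 1` there is a measurable `g_k : ℝ → [0,∞)` dominating the `k`-th
`u`-derivative of `f_x` uniformly over `u ∈ [−1,1]`, with `E_{x∼N(0,1)}[g_k(x)] < ∞`. -/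
theorem exists_integrable_bound_iteratedDeriv_fX (q : ℝ) (hq : q ∈ Set.Ioc (0 : ℝ) 1)
    (k : ℕ) (hk : 1 ≤ k) :
    ∃ g : ℝ → ℝ, Measurable g ∧ (∀ x, 0 ≤ g x) ∧
      (∀ x : ℝ, ∀ u ∈ Set.Icc (-1 : ℝ) 1, |iteratedDeriv k (fun v => fX q x v) u| ≤ g x) ∧
      Integrable g (gaussianReal 0 1) := by
  obtain ⟨k, rfl⟩ : ∃ m, k = m + 1 := ⟨k - 1, by omega⟩
  have hmem : (fun x u => (-(1 - q)) * (x - (1 - q) * u) - dexpo q x u * wt q x u) ∈ diffAlg q :=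
    (diffAlg q).sub_mem
      ((diffAlg q).mul_mem (const_mem_diffAlg q _) ((diffAlg q).sub_mem (x_mem_diffAlg q)
        ((diffAlg q).mul_mem (const_mem_diffAlg q _) (u_mem_diffAlg q))))
      ((diffAlg q).mul_mem (dexpo_mem_diffAlg q) (wt_mem_diffAlg q))
  obtain ⟨G, hG, hi⟩ := diffAlg_iteratedDeriv hq k hmem
  obtain ⟨C, n, hC, hb⟩ := diffAlg_bound hq hG
  refine ⟨fun x => C * (1 + |x|) ^ n, by fun_prop, fun x => by positivity, fun x u hu => ?_,
    (integrable_one_add_abs_pow n).const_mul C⟩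
  have hd : deriv (fun v => fX q x v)
      = fun u => (-(1 - q)) * (x - (1 - q) * u) - dexpo q x u * wt q x u :=
    funext fun u => (hasDerivAt_fX hq x u).deriv
  rw [iteratedDeriv_succ', hd, hi x]
  exact hb x u hu
end

section
/- For every σ > 0 and q ∈ (0,1], the PLRV L_{σ,q} of a single iteration of the Poisson subsampled Gaussian mechanism satisfies Var(L_{σ,q}) ≤ 1/σ² + 1/(4σ⁴). -/
/-!
Writing `a(t) = (2t - 1) / (2σ²)`, the privacy loss is `ln (1 - q + q·exp (a(t)))`. Increasing `t`
by `d ≥ 0` multiplies the argument of the logarithm by a factor between `1` and `exp (d/σ²)`, so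
the privacy loss is `1/σ²`-Lipschitz (`abs_plrv_sub_le`). Since the variance is at most the mean
squared deviation from any constant, comparing with the value of the loss at the mean `q` of
`P_{σ,q}` gives `Var(L) ≤ σ⁻⁴·Var(t)`. As a mixture of `N(1,σ²)` and `N(0,σ²)`, the law `P_{σ,q}`
has variance `σ² + q(1 - q) ≤ σ² + 1/4`.
-/

open MeasureTheory ProbabilityTheory Real Filter

/-- Density of the dominating-pair mixture `P_{σ,q}` for the Poisson subsampled Gaussian
mechanism with sensitivity 1: `p_{σ,q}(t) = q·φ_σ(t−1) + (1−q)·φ_σ(t)`. -/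
noncomputable def mixDensity (σ q t : ℝ) : ℝ :=
  q * gaussianPDFReal 1 (σ ^ 2).toNNReal t + (1 - q) * gaussianPDFReal 0 (σ ^ 2).toNNReal t

/-- The mixture measure `P_{σ,q}`. -/
noncomputable def mixMeasure (σ q : ℝ) : Measure ℝ :=
  MeasureTheory.volume.withDensity fun t => ENNReal.ofReal (mixDensity σ q t)

/-- The privacy loss function `t ↦ ln(p_{σ,q}(t)/φ_σ(t))`. -/
noncomputable def plrv (σ q t : ℝ) : ℝ :=
  Real.log (mixDensity σ q t / gaussianPDFReal 0 (σ ^ 2).toNNReal t)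

lemma mixMeasure_eq (σ q : ℝ) (hσ : 0 < σ) (hq : q ∈ Set.Ioc (0 : ℝ) 1) :
    mixMeasure σ q = ENNReal.ofReal q • gaussianReal 1 (σ ^ 2).toNNReal
      + ENNReal.ofReal (1 - q) • gaussianReal 0 (σ ^ 2).toNNReal := by
  have hv : (σ ^ 2).toNNReal ≠ 0 := by
    have : 0 < σ ^ 2 := by positivity
    simpa using this.ne'
  have h1q : 0 ≤ 1 - q := by linarith [hq.2]
  rw [gaussianReal_of_var_ne_zero _ hv, gaussianReal_of_var_ne_zero _ hv,
    ← withDensity_smul _ (measurable_gaussianPDF _ _),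
    ← withDensity_smul _ (measurable_gaussianPDF _ _),
    ← withDensity_add_left ((measurable_gaussianPDF _ _).const_smul _), mixMeasure]
  congr 1
  ext t
  have h1 := gaussianPDFReal_nonneg 1 (σ ^ 2).toNNReal t
  have h0 := gaussianPDFReal_nonneg 0 (σ ^ 2).toNNReal t
  simp only [mixDensity, Pi.add_apply, Pi.smul_apply, smul_eq_mul, gaussianPDF]
  rw [ENNReal.ofReal_add (mul_nonneg hq.1.le h1) (mul_nonneg h1q h0),
    ENNReal.ofReal_mul hq.1.le, ENNReal.ofReal_mul h1q]

lemma plrv_eq (σ q : ℝ) (hσ : 0 < σ) (t : ℝ) :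
    plrv σ q t = Real.log (1 - q + q * Real.exp ((2 * t - 1) / (2 * σ ^ 2))) := by
  have hv : (σ ^ 2).toNNReal ≠ 0 := by
    have : 0 < σ ^ 2 := by positivity
    simpa using this.ne'
  have h0 := gaussianPDFReal_pos 0 (σ ^ 2).toNNReal t hv
  have h1 : gaussianPDFReal 1 (σ ^ 2).toNNReal t
      = Real.exp ((2 * t - 1) / (2 * σ ^ 2)) * gaussianPDFReal 0 (σ ^ 2).toNNReal t := by
    simp only [gaussianPDFReal, Real.coe_toNNReal _ (sq_nonneg σ)]
    rw [mul_left_comm, ← Real.exp_add]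
    congr 2
    field_simp
    ring
  rw [plrv, mixDensity, h1]
  congr 1
  field_simp
  ring

/-- One-sided form of the Lipschitz bound: the loss is nondecreasing with slope at most `1/σ²`. -/
lemma plrv_sub_mem (σ q : ℝ) (hσ : 0 < σ) (hq : q ∈ Set.Ioc (0 : ℝ) 1) {x y : ℝ} (h : y ≤ x) :
    0 ≤ plrv σ q x - plrv σ q y ∧ plrv σ q x - plrv σ q y ≤ (x - y) / σ ^ 2 := by
  have hq0 := hq.1
  have h1q : 0 ≤ 1 - q := by linarith [hq.2]
  have hd : 0 ≤ (x - y) / σ ^ 2 := div_nonneg (by linarith) (by positivity)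
  have hA : 0 < 1 - q + q * Real.exp ((2 * y - 1) / (2 * σ ^ 2)) := by positivity
  have hx : Real.exp ((2 * x - 1) / (2 * σ ^ 2))
      = Real.exp ((x - y) / σ ^ 2) * Real.exp ((2 * y - 1) / (2 * σ ^ 2)) := by
    rw [← Real.exp_add]
    congr 1
    field_simp
    ring
  have he : 1 ≤ Real.exp ((x - y) / σ ^ 2) := Real.one_le_exp hd
  rw [plrv_eq σ q hσ, plrv_eq σ q hσ, hx]
  have hB := mul_pos hq0 (Real.exp_pos ((2 * y - 1) / (2 * σ ^ 2)))
  have hup : 1 - q + q * (Real.exp ((x - y) / σ ^ 2) * Real.exp ((2 * y - 1) / (2 * σ ^ 2)))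
      ≤ Real.exp ((x - y) / σ ^ 2) * (1 - q + q * Real.exp ((2 * y - 1) / (2 * σ ^ 2))) := by
    nlinarith
  have hlo : 1 - q + q * Real.exp ((2 * y - 1) / (2 * σ ^ 2))
      ≤ 1 - q + q * (Real.exp ((x - y) / σ ^ 2) * Real.exp ((2 * y - 1) / (2 * σ ^ 2))) := by
    nlinarith
  have l1 := Real.log_le_log hA hlo
  have l2 := Real.log_le_log (hA.trans_le hlo) hup
  rw [Real.log_mul (Real.exp_pos _).ne' hA.ne', Real.log_exp] at l2
  constructor <;> linarith

lemma abs_plrv_sub_le (σ q : ℝ) (hσ : 0 < σ) (hq : q ∈ Set.Ioc (0 : ℝ) 1) (x y : ℝ) :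
    |plrv σ q x - plrv σ q y| ≤ |(x - y) / σ ^ 2| := by
  rcases le_total y x with h | h
  · obtain ⟨h1, h2⟩ := plrv_sub_mem σ q hσ hq h
    rw [abs_of_nonneg h1]
    exact h2.trans (le_abs_self _)
  · obtain ⟨h1, h2⟩ := plrv_sub_mem σ q hσ hq h
    rw [abs_sub_comm, abs_of_nonneg h1]
    refine h2.trans (le_trans (le_of_eq ?_) (neg_le_abs _))
    ring

lemma integrable_sub_sq_gaussianReal (μ c : ℝ) (v : NNReal) :
    Integrable (fun t => (t - c) ^ 2) (gaussianReal μ v) := by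
  have h : MemLp (fun t : ℝ => t - c) 2 (gaussianReal μ v) :=
    (memLp_id_gaussianReal 2).sub (memLp_const c)
  exact h.integrable_sq

lemma integral_sub_sq_gaussianReal (μ c : ℝ) (v : NNReal) :
    ∫ t, (t - c) ^ 2 ∂(gaussianReal μ v) = v + (μ - c) ^ 2 := by
  have hid : MemLp (fun t : ℝ => t) 2 (gaussianReal μ v) := memLp_id_gaussianReal 2
  have h : MemLp (fun t : ℝ => t - c) 2 (gaussianReal μ v) := hid.sub (memLp_const c)
  have h2 := variance_eq_sub h
  rw [variance_sub_const hid.aestronglyMeasurable, variance_fun_id_gaussianReal,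
    integral_sub (hid.integrable one_le_two) (integrable_const c), integral_id_gaussianReal] at h2
  simp only [Pi.pow_apply, integral_const, probReal_univ, smul_eq_mul, one_mul] at h2
  linarith

/-- The variance of the PLRV of a single iteration of the Poisson subsampled Gaussian
mechanism is at most `1/σ² + 1/(4σ⁴)`. -/
theorem plrv_variance_upper_bound (σ q : ℝ) (hσ : 0 < σ) (hq : q ∈ Set.Ioc (0 : ℝ) 1) :
    ProbabilityTheory.variance (plrv σ q) (mixMeasure σ q) ≤ 1 / σ ^ 2 + 1 / (4 * σ ^ 4) := by
  have h1q : 0 ≤ 1 - q := by linarith [hq.2]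
  have hmeas : Measurable (plrv σ q) := by
    have : plrv σ q = fun t => Real.log (1 - q + q * Real.exp ((2 * t - 1) / (2 * σ ^ 2))) :=
      funext (plrv_eq σ q hσ)
    rw [this]
    fun_prop
  have hprob : IsProbabilityMeasure (mixMeasure σ q) := by
    constructor
    rw [mixMeasure_eq σ q hσ hq]
    simp only [Measure.add_apply, Measure.smul_apply, measure_univ, smul_eq_mul, mul_one]
    rw [← ENNReal.ofReal_add hq.1.le h1q]
    simp
  have hi1 := (integrable_sub_sq_gaussianReal 1 q (σ ^ 2).toNNReal).smul_measure
    (c := ENNReal.ofReal q) ENNReal.ofReal_ne_top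
  have hi0 := (integrable_sub_sq_gaussianReal 0 q (σ ^ 2).toNNReal).smul_measure
    (c := ENNReal.ofReal (1 - q)) ENNReal.ofReal_ne_top
  have hint : Integrable (fun t => (t - q) ^ 2) (mixMeasure σ q) := by
    rw [mixMeasure_eq σ q hσ hq]
    exact hi1.add_measure hi0
  have hval : ∫ t, (t - q) ^ 2 ∂(mixMeasure σ q) = σ ^ 2 + q * (1 - q) := by
    rw [mixMeasure_eq σ q hσ hq, integral_add_measure hi1 hi0, integral_smul_measure,
      integral_smul_measure, integral_sub_sq_gaussianReal, integral_sub_sq_gaussianReal,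
      ENNReal.toReal_ofReal hq.1.le, ENNReal.toReal_ofReal h1q, Real.coe_toNNReal _ (sq_nonneg σ)]
    simp only [smul_eq_mul]
    ring
  calc variance (plrv σ q) (mixMeasure σ q)
      = variance (fun t => plrv σ q t - plrv σ q q) (mixMeasure σ q) :=
        (variance_sub_const hmeas.aestronglyMeasurable _).symm
    _ ≤ ∫ t, (plrv σ q t - plrv σ q q) ^ 2 ∂(mixMeasure σ q) :=
        variance_le_expectation_sq (hmeas.sub_const _).aestronglyMeasurable
    _ ≤ ∫ t, (t - q) ^ 2 / σ ^ 4 ∂(mixMeasure σ q) := by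
        refine integral_mono_of_nonneg (ae_of_all _ fun t => sq_nonneg _) (hint.div_const _)
          (ae_of_all _ fun t => ?_)
        refine (sq_le_sq.mpr (abs_plrv_sub_le σ q hσ hq t q)).trans (le_of_eq ?_)
        rw [div_pow]
        ring
    _ = (σ ^ 2 + q * (1 - q)) / σ ^ 4 := by rw [integral_div, hval]
    _ ≤ (σ ^ 2 + 1 / 4) / σ ^ 4 := by
        gcongr
        nlinarith [sq_nonneg (q - 1 / 2)]
    _ = 1 / σ ^ 2 + 1 / (4 * σ ^ 4) := by
        field_simp
end
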